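/- For all 1 ≤ l ≤ n: X_l·D_l = (q−q^{−1})^{−1}·(T^{−1})^+_{l,n−1}·(Y_n − Y_n^{−1})·T^-_{n−1,l} and D_l·X_l = (q−q^{−1})^{−1}·(T^{−1})^-_{l−1,1}·(qY_1 − q^{−1}Y_1^{−1})·T^+_{1,l−1}. Moreover, for all n ≥ j > i ≥ 1: D_jX_i − X_iD_j = (τ^{−1}−τ)(q−q^{−1})^{−1}·(T^{−1})^+_{i,n−1}·(T^{−1})^-_{j−2,1}·(qY_1 + Y_n^{−1})·T^-_{n−1,j}·T^+_{1,i−1}, and D_iX_j − X_jD_i = (τ^{−1}−τ)(q−q^{−1})^{−1}·(T^{−1})^-_{i−1,1}·(T^{−1})^+_{j,n−1}·(q^{−1}Y_1^{−1} + Y_n)·T^+_{1,j−2}·T^-_{n−1,i}. -/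

import Mathlib

noncomputable section

/-- The Laurent polynomial ring `R[X₁^{±1}, …, Xₙ^{±1}]` in `n` variables over `R`,
realised as the monoid algebra of the additive monoid `Fin n →₀ ℤ` of exponent vectors. -/
abbrev Laur (R : Type*) [CommRing R] (n : ℕ) : Type _ :=
  AddMonoidAlgebra R (Fin n →₀ ℤ)

variable {R : Type*} [CommRing R] {n : ℕ}

/-- The monomial `c · X^a`. -/
def mono (a : Fin n →₀ ℤ) (c : R) : Laur R n := AddMonoidAlgebra.single a c

/-- The generator `X_i`. -/
def Xel (i : Fin n) : Laur R n := mono (Finsupp.single i 1) 1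

/-- The element `X_i⁻¹`. -/
def XinvEl (i : Fin n) : Laur R n := mono (Finsupp.single i (-1)) 1

/-- Multiplication by a Laurent polynomial, as a linear endomorphism. -/
def mulOp (x : Laur R n) : Module.End R (Laur R n) := LinearMap.mulLeft R x

/-- The operator of multiplication by `X_i`, with `ℕ`-indexing (`0`-based; junk value `1`
out of range). -/
def XOp (i : ℕ) : Module.End R (Laur R n) :=
  if h : i < n then mulOp (Xel ⟨i, h⟩) else 1

/-- The operator of multiplication by `X_i⁻¹`, with `ℕ`-indexing. -/
def XinvOp (i : ℕ) : Module.End R (Laur R n) :=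
  if h : i < n then mulOp (XinvEl ⟨i, h⟩) else 1

/-- Ascending product `f s * f (s+1) * ⋯ * f (s+len-1)` (equal to `1` when `len = 0`). -/
def aF {M : Type*} [Monoid M] (f : ℕ → M) (s len : ℕ) : M :=
  ((List.range' s len).map f).prod

/-- Descending product `f (s+len-1) * ⋯ * f (s+1) * f s` (equal to `1` when `len = 0`). -/
def dF {M : Type*} [Monoid M] (f : ℕ → M) (s len : ℕ) : M :=
  (((List.range' s len).map f).reverse).prod

/-- Integer power `u^z`, where `v` is a designated (two-sided) inverse of `u`. -/
def zpowOp {M : Type*} [Monoid M] (u v : M) (z : ℤ) : M :=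
  if 0 ≤ z then u ^ z.toNat else v ^ (-z).toNat

/-!
Cancelling the denominators `X_{k+1} - X_k` shows that the operators satisfy the relations of the
double affine Hecke algebra, and everything else takes place in an arbitrary algebra with units
obeying these relations. There `t_k x_k t_k = x_{k+1}` gives `D_j = κ x_j⁻¹ (E_j - E_j⁻¹)`, where
`E_j` is a cyclic product of `π⁻¹` and letters `t⁻¹` only, conjugate to `Y_n` by such letters.
Conjugation by `x_j` turns every `t⁻¹` in `E_j` into `t` and produces a factor `q`, so that
`x_j⁻¹ E_j x_j` is `q` times a conjugate of `Y_1`: these are the formulas for `X_l D_l` and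
`D_l X_l`. For `i ≠ j`, moving `x_i` through `E_j` changes it only at a single letter
`t⁻¹ = t + δ`, which leaves one cross term `δ x_j g`. Hence `[D_j, x_i]` is the scalar `δ κ` times
`g + (x_j⁻¹ E_j x_j)⁻¹ g E_j⁻¹`, and braid relations bring the two summands to the stated forms.
-/
section Segments

variable {M : Type*} [Monoid M] {f g : ℕ → M} {a b c k : ℕ}

/-- The ascending product `f a * f (a + 1) * ⋯ * f (b - 1)`: the same product as `aF`, but indexed
by its endpoints, so that adjacent segments concatenate without truncated subtraction. -/
def seg (f : ℕ → M) (a b : ℕ) : M :=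
  aF f a (b - a)

@[simp]
lemma seg_self (f : ℕ → M) (a : ℕ) : seg f a a = 1 := by
  simp [seg, aF]

lemma seg_succ (f : ℕ → M) (hab : a ≤ b) : seg f a (b + 1) = seg f a b * f b := by
  simp [seg, aF, Nat.succ_sub hab, List.range'_concat, hab]

lemma seg_mul_seg (f : ℕ → M) (hab : a ≤ b) (hbc : b ≤ c) :
    seg f a b * seg f b c = seg f a c := by
  induction c, hbc using Nat.le_induction with
  | base => simp
  | succ c hbc ih => rw [seg_succ f hbc, ← mul_assoc, ih, seg_succ f (hab.trans hbc)]

lemma seg_eq_mul_mul (f : ℕ → M) (hak : a ≤ k) (hkb : k < b) :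
    seg f a b = seg f a k * f k * seg f (k + 1) b := by
  rw [← seg_succ f hak, seg_mul_seg f (by lia) (by lia)]

lemma seg_comp_succ (f : ℕ → M) (a b : ℕ) :
    seg (fun k => f (k + 1)) a b = seg f (a + 1) (b + 1) := by
  rw [seg, seg, aF, aF, Nat.add_sub_add_right, add_comm a 1, ← List.map_add_range', List.map_map]
  simp only [Function.comp_def, add_comm]

lemma semiconjBy_seg {u : M} (h : ∀ k, a ≤ k → k < b → SemiconjBy u (f k) (g k)) :
    SemiconjBy u (seg f a b) (seg g a b) := by
  rcases le_total b a with hba | hab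
  · simp [seg, aF, Nat.sub_eq_zero_of_le hba]
  induction b, hab using Nat.le_induction with
  | base => simp
  | succ b hab ih =>
    rw [seg_succ f hab, seg_succ g hab]
    exact (ih fun k hak hkb => h k hak (by lia)).mul_right (h b hab (by lia))

lemma commute_seg {u : M} (h : ∀ k, a ≤ k → k < b → Commute u (f k)) : Commute u (seg f a b) :=
  semiconjBy_seg h

lemma aF_eq_val_seg {t : ℕ → Mˣ} (h : ∀ k < b, f k = t k) : aF f a (b - a) = seg t a b := by
  rw [seg, aF, aF, ← Units.coeHom_apply, map_list_prod, List.map_map]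
  congr 1
  exact List.map_congr_left fun k hk => h k (by rw [List.mem_range'_1] at hk; lia)

lemma dF_eq_val_inv_seg {t : ℕ → Mˣ} (h : ∀ k < b, f k = ↑(t k)⁻¹) :
    dF f a (b - a) = ↑(seg t a b)⁻¹ := by
  rw [seg, aF, List.prod_inv_reverse, ← Units.coeHom_apply, map_list_prod, dF, List.map_reverse,
    List.map_map, List.map_map]
  congr 2
  exact List.map_congr_left fun k hk => h k (by rw [List.mem_range'_1] at hk; lia)

end Segments

section Braid

/-- The elements `t 0, …, t (N - 1)` of a monoid satisfy the relations of the braid group on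
`N + 1` strands. Values of `t` outside this range are ignored. -/
structure IsBraid {G : Type*} [Monoid G] (N : ℕ) (t : ℕ → G) : Prop where
  braid : ∀ k, k + 1 < N → t k * t (k + 1) * t k = t (k + 1) * t k * t (k + 1)
  commute : ∀ k m, k + 1 < m → m < N → Commute (t k) (t m)

variable {G : Type*} [Group G] {N a b c d k : ℕ} {t : ℕ → G}

namespace IsBraid

lemma inv (h : IsBraid N t) : IsBraid N t⁻¹ where
  braid k hk := by simpa [mul_assoc] using congrArg (·⁻¹) (h.braid k hk)
  commute k m hkm hm := (h.commute k m hkm hm).inv_inv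

lemma commute_seg_inv_seg (h : IsBraid N t) (hbc : b < c) (hdN : d ≤ N) :
    Commute (seg t a b) (seg t⁻¹ c d) :=
  commute_seg fun m hcm hmd => (commute_seg fun k _ hkb =>
    (h.commute k m (by lia) (by lia)).symm.inv_left).symm

lemma commute_inv_seg_seg (h : IsBraid N t) (hbc : b < c) (hdN : d ≤ N) :
    Commute (seg t⁻¹ a b) (seg t c d) :=
  commute_seg fun m hcm hmd => (commute_seg fun k _ hkb =>
    (h.commute k m (by lia) (by lia)).symm.inv_right).symm

lemma semiconjBy_seg (h : IsBraid N t) (hak : a ≤ k) (hkb : k + 1 < b) (hbN : b ≤ N) :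
    SemiconjBy (seg t a b) (t k) (t (k + 1)) := by
  have hmid : SemiconjBy (t k * t (k + 1)) (t k) (t (k + 1)) := by
    rw [SemiconjBy, h.braid k (by lia), mul_assoc]
  have hleft : Commute (seg t a k) (t (k + 1)) :=
    (commute_seg fun m _ hmk => (h.commute m (k + 1) (by lia) (by lia)).symm).symm
  have hright : Commute (seg t (k + 2) b) (t k) :=
    (commute_seg fun m hkm hmb => h.commute k m (by lia) (by lia)).symm
  rw [seg_eq_mul_mul t hak (by lia : k < b), seg_eq_mul_mul t (le_refl (k + 1)) hkb, seg_self,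
    one_mul, ← mul_assoc, mul_assoc (seg t a k)]
  exact (SemiconjBy.mul_left hleft hmid).mul_left hright

lemma semiconjBy_inv_seg (h : IsBraid N t) (hak : a ≤ k) (hkb : k + 1 < b) (hbN : b ≤ N) :
    SemiconjBy (seg t⁻¹ a b) (t k) (t (k + 1)) := by
  simpa using h.inv.semiconjBy_seg hak hkb hbN

end IsBraid

end Braid

section DoubleAffineBraid

variable {K G : Type*} [Group K] [Group G] [MulAction K G]

/-- The elements `t 0, …, t (N - 1)`, `x 0, …, x N` and `p` of a group satisfy the relations of the
double affine braid group of type `GL` with `N + 1` strands, where `p` plays the role of `π⁻¹` and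
the central parameter `q` acts by scalars. Values of `t` and `x` outside these ranges are
ignored. -/
structure IsDoubleAffineBraid (q : K) (N : ℕ) (t x : ℕ → G) (p : G) : Prop
    extends IsBraid N t where
  t_mul_x_mul_t : ∀ k < N, t k * x k * t k = x (k + 1)
  commute_t_x : ∀ k m, k < N → m ≤ N → m ≠ k → m ≠ k + 1 → Commute (t k) (x m)
  commute_x_x : ∀ k m, k ≤ N → m ≤ N → Commute (x k) (x m)
  semiconjBy_p_t : ∀ k, k + 1 < N → SemiconjBy p (t (k + 1)) (t k)
  semiconjBy_p_x : ∀ k < N, SemiconjBy p (x (k + 1)) (x k)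
  p_mul_x_zero : p * x 0 = q • (x N * p)

/-- The product `f j * ⋯ * f (N - 1) * p * f 0 * ⋯ * f (j - 1)`. For a double affine braid
`t, x, p` the element `Y_{j + 1}` of the double affine Hecke algebra has the letters `t` to the left
of `p` and `t⁻¹` to its right; `cyclicProd t⁻¹ p N N` is the last one and `cyclicProd t p N 0` the
first. -/
def cyclicProd (f : ℕ → G) (p : G) (N j : ℕ) : G :=
  seg f j N * p * seg f 0 j

/-- Up to scalars, the commutator of `cyclicProd t⁻¹ p N (j + 1)` and `x i` in the double affine
Hecke algebra is `x (j + 1)` times this element, for `i ≤ j`. -/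
def upperCross (t : ℕ → G) (p : G) (N i j : ℕ) : G :=
  seg t (j + 1) N * p * seg t 0 i * seg t⁻¹ (i + 1) (j + 1)

/-- Up to scalars, the commutator of `cyclicProd t⁻¹ p N i` and `x (j + 1)` in the double affine
Hecke algebra is `x i` times this element, for `i ≤ j`. -/
def lowerCross (t : ℕ → G) (p : G) (N i j : ℕ) : G :=
  seg t i j * seg t⁻¹ (j + 1) N * p * seg t⁻¹ 0 i

variable {q : K} {N : ℕ} {t x : ℕ → G} {p : G} {a b c i j k : ℕ}

lemma cyclicProd_zero : cyclicProd t p N 0 = seg t 0 N * p := by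
  simp [cyclicProd]

lemma cyclicProd_last : cyclicProd t p N N = p * seg t 0 N := by
  simp [cyclicProd]

lemma cyclicProd_eq_conj_zero (hjN : j ≤ N) :
    cyclicProd t p N j = (seg t 0 j)⁻¹ * cyclicProd t p N 0 * seg t 0 j := by
  rw [cyclicProd, cyclicProd_zero, ← seg_mul_seg t j.zero_le hjN]
  group

lemma cyclicProd_eq_conj_last (hjN : j ≤ N) :
    cyclicProd t p N j = seg t j N * cyclicProd t p N N * (seg t j N)⁻¹ := by
  rw [cyclicProd, cyclicProd_last, ← seg_mul_seg t j.zero_le hjN]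
  group

namespace IsDoubleAffineBraid

section Cross

variable (h : IsDoubleAffineBraid q N t x p)
include h

lemma commute_x_inv_seg (hcN : c ≤ N) (hbN : b ≤ N) (hc : c < a ∨ b < c) :
    Commute (x c) (seg t⁻¹ a b) :=
  commute_seg fun k hak hkb =>
    (h.commute_t_x k c (by lia) hcN (by lia) (by lia)).symm.inv_right

lemma inv_seg_mul_x (hab : a ≤ b) (hbN : b ≤ N) : seg t⁻¹ a b * x b = x a * seg t a b := by
  induction b, hab using Nat.le_induction with
  | base => simp
  | succ b hab ih =>
    rw [seg_succ t hab, seg_succ t⁻¹ hab, ← mul_assoc (x a), ← ih (by lia),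
      ← h.t_mul_x_mul_t b (by lia)]
    simp [mul_assoc]

lemma semiconjBy_p_seg (hbN : b + 1 ≤ N) : SemiconjBy p (seg t (a + 1) (b + 1)) (seg t a b) := by
  rw [← seg_comp_succ]
  exact semiconjBy_seg fun k _ hkb => h.semiconjBy_p_t k (by lia)

lemma semiconjBy_p_inv_seg (hbN : b + 1 ≤ N) :
    SemiconjBy p (seg t⁻¹ (a + 1) (b + 1)) (seg t⁻¹ a b) := by
  rw [← seg_comp_succ]
  exact semiconjBy_seg fun k _ hkb => (h.semiconjBy_p_t k (by lia)).inv_right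

lemma commute_cyclicProd_last_t (hk : k + 1 < N) : Commute (cyclicProd t⁻¹ p N N) (t k) := by
  rw [cyclicProd_last]
  exact (h.semiconjBy_p_t k hk).mul_left (h.semiconjBy_inv_seg k.zero_le hk le_rfl)

lemma commute_cyclicProd_zero_t (hk : k + 1 < N) : Commute (cyclicProd t p N 0) (t (k + 1)) := by
  rw [cyclicProd_zero]
  exact (h.toIsBraid.semiconjBy_seg k.zero_le hk le_rfl).mul_left (h.semiconjBy_p_t k hk)

lemma commute_cyclicProd_last_seg (hb : b < N) :
    Commute (cyclicProd t⁻¹ p N N) (seg t a b) :=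
  commute_seg fun _ _ _ => h.commute_cyclicProd_last_t (by lia)

lemma commute_cyclicProd_zero_inv_seg (hbN : b ≤ N) :
    Commute (cyclicProd t p N 0) (seg t⁻¹ (a + 1) b) :=
  commute_seg fun k hak hkb => by
    obtain ⟨m, rfl⟩ : ∃ m, k = m + 1 := ⟨k - 1, by lia⟩
    exact (h.commute_cyclicProd_zero_t (by lia)).inv_right

lemma conj_cyclicProd_zero_eq_upperCross (hij : i ≤ j) (hjN : j < N) :
    seg t⁻¹ i N * (seg t 0 j)⁻¹ * cyclicProd t p N 0 * (seg t⁻¹ (j + 1) N)⁻¹ * seg t 0 i =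
      upperCross t p N i j := by
  have hcomm : Commute ((seg t 0 j)⁻¹ * cyclicProd t p N 0) (seg t⁻¹ (j + 1) N)⁻¹ :=
    ((h.commute_seg_inv_seg (by lia) le_rfl).inv_left.mul_left
      (h.commute_cyclicProd_zero_inv_seg le_rfl)).inv_right
  have hleft : seg t⁻¹ i N * (seg t⁻¹ (j + 1) N)⁻¹ = seg t⁻¹ i j * (t j)⁻¹ := by
    rw [mul_inv_eq_iff_eq_mul, seg_eq_mul_mul t⁻¹ hij hjN, Pi.inv_apply]
  have hright : (seg t 0 j)⁻¹ * cyclicProd t p N 0 = t j * seg t (j + 1) N * p := by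
    rw [inv_mul_eq_iff_eq_mul, cyclicProd_zero, seg_eq_mul_mul t j.zero_le hjN]
    simp only [mul_assoc]
  calc
    _ = seg t⁻¹ i N * (((seg t 0 j)⁻¹ * cyclicProd t p N 0) * (seg t⁻¹ (j + 1) N)⁻¹) *
          seg t 0 i := by simp only [mul_assoc]
    _ = (seg t⁻¹ i N * (seg t⁻¹ (j + 1) N)⁻¹) * ((seg t 0 j)⁻¹ * cyclicProd t p N 0) *
          seg t 0 i := by rw [hcomm.eq]; simp only [mul_assoc]
    _ = (seg t⁻¹ i j * seg t (j + 1) N) * p * seg t 0 i := by rw [hleft, hright]; group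
    _ = seg t (j + 1) N * (p * seg t⁻¹ (i + 1) (j + 1)) * seg t 0 i := by
      rw [(h.commute_inv_seg_seg (by lia) le_rfl).eq, (h.semiconjBy_p_inv_seg (by lia)).eq]
      simp only [mul_assoc]
    _ = upperCross t p N i j := by
      rw [upperCross, mul_assoc _ (seg t 0 i),
        (h.commute_seg_inv_seg (Nat.lt_succ_self i) (by lia)).eq]
      simp only [mul_assoc]

lemma conj_inv_cyclicProd_last_eq_upperCross (hij : i ≤ j) (hjN : j < N) :
    seg t⁻¹ i N * (seg t 0 j)⁻¹ * (cyclicProd t⁻¹ p N N)⁻¹ * (seg t⁻¹ (j + 1) N)⁻¹ * seg t 0 i =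
      (cyclicProd t p N (j + 1))⁻¹ * upperCross t p N i j * (cyclicProd t⁻¹ p N (j + 1))⁻¹ := by
  have hcomm : Commute ((cyclicProd t⁻¹ p N N)⁻¹ * (seg t⁻¹ (j + 1) N)⁻¹) (seg t 0 i) :=
    (h.commute_cyclicProd_last_seg (by lia)).inv_left.mul_left
      (h.commute_seg_inv_seg (by lia) le_rfl).symm.inv_left
  have hlast : Commute (seg t i j)⁻¹ (cyclicProd t⁻¹ p N N)⁻¹ :=
    (h.commute_cyclicProd_last_seg hjN).symm.inv_inv
  have hshift : p⁻¹ * (seg t i j)⁻¹ = (seg t (i + 1) (j + 1))⁻¹ * p⁻¹ := by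
    rw [← mul_inv_rev, ← mul_inv_rev, (h.semiconjBy_p_seg hjN).eq]
  have hbraid : Commute (seg t⁻¹ 0 i)⁻¹ (seg t (i + 1) (j + 1))⁻¹ :=
    (h.commute_inv_seg_seg (Nat.lt_succ_self i) (by lia)).inv_inv
  calc
    _ = seg t⁻¹ i N * (seg t 0 j)⁻¹ *
          (((cyclicProd t⁻¹ p N N)⁻¹ * (seg t⁻¹ (j + 1) N)⁻¹) * seg t 0 i) := by
      simp only [mul_assoc]
    _ = seg t⁻¹ i N * ((seg t i j)⁻¹ * (cyclicProd t⁻¹ p N N)⁻¹) * (seg t⁻¹ (j + 1) N)⁻¹ := by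
      rw [hcomm.eq, ← seg_mul_seg t i.zero_le hij]
      group
    _ = (seg t⁻¹ 0 i)⁻¹ * (p⁻¹ * (seg t i j)⁻¹) * (seg t⁻¹ (j + 1) N)⁻¹ := by
      rw [hlast.eq, cyclicProd_last, ← seg_mul_seg t⁻¹ i.zero_le (hij.trans hjN.le)]
      group
    _ = (seg t (i + 1) (j + 1))⁻¹ * (seg t⁻¹ 0 i)⁻¹ * p⁻¹ * (seg t⁻¹ (j + 1) N)⁻¹ := by
      rw [hshift, ← mul_assoc _ _ p⁻¹, hbraid.eq]
    _ = _ := by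
      rw [cyclicProd, cyclicProd, upperCross, seg_eq_mul_mul t i.zero_le (Nat.lt_succ_of_le hij),
        seg_eq_mul_mul t⁻¹ i.zero_le (Nat.lt_succ_of_le hij), Pi.inv_apply]
      group

lemma conj_cyclicProd_last_eq_lowerCross (hij : i ≤ j) (hjN : j < N) :
    (seg t 0 i)⁻¹ * seg t⁻¹ (j + 1) N * cyclicProd t⁻¹ p N N * seg t 0 j * (seg t⁻¹ i N)⁻¹ =
      lowerCross t p N i j := by
  have hcomm : Commute (seg t⁻¹ (j + 1) N * cyclicProd t⁻¹ p N N) (seg t 0 j) :=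
    (h.commute_seg_inv_seg (by lia) le_rfl).symm.mul_left (h.commute_cyclicProd_last_seg hjN)
  calc
    _ = (seg t 0 i)⁻¹ * (seg t⁻¹ (j + 1) N * cyclicProd t⁻¹ p N N * seg t 0 j) *
          (seg t⁻¹ i N)⁻¹ := by simp only [mul_assoc]
    _ = lowerCross t p N i j := by
      rw [hcomm.eq, cyclicProd_last, ← seg_mul_seg t i.zero_le hij,
        ← seg_mul_seg t⁻¹ i.zero_le (hij.trans hjN.le), lowerCross]
      group

lemma conj_inv_cyclicProd_zero_eq_lowerCross (hij : i ≤ j) (hjN : j < N) :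
    (seg t 0 i)⁻¹ * seg t⁻¹ (j + 1) N * (cyclicProd t p N 0)⁻¹ * seg t 0 j * (seg t⁻¹ i N)⁻¹ =
      (cyclicProd t p N i)⁻¹ * lowerCross t p N i j * (cyclicProd t⁻¹ p N i)⁻¹ := by
  have hcomm : Commute (seg t⁻¹ (j + 1) N) ((cyclicProd t p N 0)⁻¹ * seg t 0 j) :=
    (h.commute_cyclicProd_zero_inv_seg le_rfl).symm.inv_right.mul_right
      (h.commute_seg_inv_seg (by lia) le_rfl).symm
  calc
    _ = (seg t 0 i)⁻¹ * (seg t⁻¹ (j + 1) N * ((cyclicProd t p N 0)⁻¹ * seg t 0 j)) *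
          (seg t⁻¹ i N)⁻¹ := by simp only [mul_assoc]
    _ = _ := by
      rw [hcomm.eq, cyclicProd_zero, ← seg_mul_seg t i.zero_le hij, lowerCross, cyclicProd,
        cyclicProd, ← seg_mul_seg t i.zero_le (hij.trans hjN.le)]
      group

variable [IsScalarTower K G G]

lemma p_mul_inv_seg_mul_x (hjN : j ≤ N) :
    p * seg t⁻¹ 0 j * x j = q • (x N * p * seg t 0 j) := by
  rw [mul_assoc, h.inv_seg_mul_x j.zero_le hjN, ← mul_assoc, h.p_mul_x_zero, smul_mul_assoc]

variable [SMulCommClass K G G]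

lemma conj_inv_cyclicProd (hjN : j ≤ N) :
    (x j)⁻¹ * cyclicProd t⁻¹ p N j * x j = q • cyclicProd t p N j := by
  rw [mul_assoc, inv_mul_eq_iff_eq_mul, cyclicProd, cyclicProd, mul_assoc, mul_assoc, ← mul_assoc p,
    h.p_mul_inv_seg_mul_x hjN, mul_smul_comm, ← mul_assoc, ← mul_assoc, h.inv_seg_mul_x hjN le_rfl,
    mul_smul_comm]
  simp only [mul_assoc]

end Cross

end IsDoubleAffineBraid

end DoubleAffineBraid

section UnitsAction

variable {K M : Type*} [Group K] [Monoid M] [MulAction K M] [SMulCommClass K M M]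
  [IsScalarTower K M M]

instance units_isScalarTower : IsScalarTower K Mˣ Mˣ where
  smul_assoc a u v := Units.ext (smul_assoc a (u : M) (v : M))

instance units_smulCommClass : SMulCommClass K Mˣ Mˣ where
  smul_comm a u v := Units.ext (smul_comm a (u : M) (v : M))

end UnitsAction

section DoubleAffineHecke

variable {M : Type*} [Ring M] [Algebra R M]

/-- The units `t, x, p` of an algebra satisfy the relations of the double affine Hecke algebra of
type `GL` in `N + 1` variables: those of the double affine braid group together with the quadratic
relations, written as `t⁻¹ = t + δ`. In terms of the usual parameter, `δ = τ⁻¹ - τ`. -/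
structure IsDoubleAffineHecke (δ : R) (q : Rˣ) (N : ℕ) (t x : ℕ → Mˣ) (p : Mˣ) : Prop
    extends IsDoubleAffineBraid q N t x p where
  inv_t : ∀ k < N, ((t k)⁻¹ : Mˣ) = (t k : M) + δ • (1 : M)

/-- The operator `D_{j + 1}`, with the normalization `(q - q⁻¹)⁻¹` replaced by a scalar `κ`. -/
def dunkl (κ : R) (t x : ℕ → Mˣ) (p : Mˣ) (N j : ℕ) : M :=
  seg t j N * (κ • (((x N)⁻¹ : Mˣ) *
    (↑(cyclicProd t⁻¹ p N N) - ↑(cyclicProd t⁻¹ p N N)⁻¹))) * ((seg t⁻¹ j N)⁻¹ : Mˣ)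

lemma commutator_inv_mul_sub_inv {x₁ x₂ e : Mˣ} {g : M} {δ : R} (hx : Commute x₁ x₂)
    (he : (e : M) * x₂ = x₂ * e + δ • (x₁ * g)) :
    (↑x₁⁻¹ * (e - ↑e⁻¹)) * x₂ - x₂ * (↑x₁⁻¹ * ((e : M) - ↑e⁻¹)) =
      δ • (g + ↑(x₁⁻¹ * e * x₁)⁻¹ * g * ↑e⁻¹) := by
  have hx' : (x₂ : M) * ↑x₁⁻¹ = ↑x₁⁻¹ * x₂ := congrArg Units.val hx.inv_left.eq.symm
  have hinv : (x₂ : M) * ↑e⁻¹ = ↑e⁻¹ * x₂ + δ • (↑e⁻¹ * x₁ * g * ↑e⁻¹) := by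
    have := congrArg (fun m => (↑e⁻¹ : M) * m * ↑e⁻¹) he
    simpa [mul_add, add_mul, mul_assoc] using this
  have hsub : ((e : M) - ↑e⁻¹) * x₂ - x₂ * ((e : M) - ↑e⁻¹) =
      δ • (x₁ * g + ↑e⁻¹ * x₁ * g * ↑e⁻¹) := by
    rw [sub_mul, mul_sub, he, hinv, smul_add]
    abel
  calc
    _ = ↑x₁⁻¹ * (((e : M) - ↑e⁻¹) * x₂ - x₂ * ((e : M) - ↑e⁻¹)) := by
      rw [mul_assoc, ← mul_assoc (x₂ : M), hx', mul_assoc, ← mul_sub]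
    _ = _ := by
      rw [hsub, mul_smul_comm, mul_add]
      simp [mul_assoc]

namespace IsDoubleAffineHecke

variable {δ κ : R} {q : Rˣ} {N i j k : ℕ} {t x : ℕ → Mˣ} {p : Mˣ}
variable (h : IsDoubleAffineHecke δ q N t x p)
include h

lemma inv_t_mul_x (hk : k < N) :
    (↑(t k)⁻¹ : M) * x k = x (k + 1) * ↑(t k)⁻¹ + δ • (x k : M) := by
  have hx : (t k : M) * x k = x (k + 1) * ↑(t k)⁻¹ :=
    congrArg Units.val (eq_mul_inv_of_mul_eq (h.t_mul_x_mul_t k hk))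
  rw [← hx, h.inv_t k hk, add_mul, smul_one_mul]

lemma inv_t_mul_x_succ (hk : k < N) (a b : Mˣ) :
    ((a * (t k)⁻¹ * x k * b : Mˣ) : M) =
      (a * x (k + 1) * (t k)⁻¹ * b : Mˣ) + δ • ((a * x k * b : Mˣ) : M) := by
  simp only [Units.val_mul, mul_assoc]
  rw [← mul_assoc _ _ (b : M), h.inv_t_mul_x hk]
  simp [mul_add, add_mul, mul_assoc]

lemma inv_cyclicProd_succ_mul_x (hij : i ≤ j) (hjN : j < N) :
    (↑(cyclicProd t⁻¹ p N (j + 1)) : M) * x i = x i * ↑(cyclicProd t⁻¹ p N (j + 1)) +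
      δ • ((x (j + 1) : M) * (q • upperCross t p N i j : Mˣ)) := by
  have hx : Commute (x i) (seg t⁻¹ (i + 1) (j + 1)) :=
    h.commute_x_inv_seg (by lia) (by lia) (by lia)
  have hp : p * seg t⁻¹ 0 i * x (i + 1) = x i * p * seg t⁻¹ 0 i := by
    rw [mul_assoc, ← (h.commute_x_inv_seg (by lia) (by lia) (by lia)).eq, ← mul_assoc,
      (h.semiconjBy_p_x i (by lia)).eq]
  have hV : Commute (x i) (seg t⁻¹ (j + 1) N) :=
    h.commute_x_inv_seg (by lia) (by lia) (by lia)
  have hsplit : cyclicProd t⁻¹ p N (j + 1) =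
      seg t⁻¹ (j + 1) N * p * seg t⁻¹ 0 i * (t i)⁻¹ * seg t⁻¹ (i + 1) (j + 1) := by
    rw [cyclicProd, seg_eq_mul_mul t⁻¹ i.zero_le (by lia : i < j + 1), Pi.inv_apply]
    simp only [mul_assoc]
  have hmain : cyclicProd t⁻¹ p N (j + 1) * x i =
      seg t⁻¹ (j + 1) N * p * seg t⁻¹ 0 i * (t i)⁻¹ * x i * seg t⁻¹ (i + 1) (j + 1) := by
    rw [hsplit, mul_assoc, ← hx.eq, ← mul_assoc]
  have hpass : seg t⁻¹ (j + 1) N * p * seg t⁻¹ 0 i * x (i + 1) * (t i)⁻¹ *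
      seg t⁻¹ (i + 1) (j + 1) = x i * cyclicProd t⁻¹ p N (j + 1) := by
    rw [mul_assoc (seg t⁻¹ (j + 1) N), mul_assoc (seg t⁻¹ (j + 1) N), hp, hsplit]
    simp only [← mul_assoc]
    rw [hV.eq]
  have hcross : seg t⁻¹ (j + 1) N * p * seg t⁻¹ 0 i * x i * seg t⁻¹ (i + 1) (j + 1) =
      x (j + 1) * q • upperCross t p N i j := by
    rw [mul_assoc (seg t⁻¹ (j + 1) N), mul_assoc (seg t⁻¹ (j + 1) N),
      h.p_mul_inv_seg_mul_x (by lia), mul_smul_comm, smul_mul_assoc, mul_smul_comm, upperCross]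
    simp only [← mul_assoc]
    rw [h.inv_seg_mul_x (by lia) le_rfl]
  rw [← Units.val_mul, hmain, h.inv_t_mul_x_succ (by lia), hpass, hcross, Units.val_mul,
    Units.val_mul]

lemma inv_cyclicProd_mul_x_succ (hij : i ≤ j) (hjN : j < N) :
    (↑(cyclicProd t⁻¹ p N i) : M) * x (j + 1) = x (j + 1) * ↑(cyclicProd t⁻¹ p N i) +
      δ • ((x i : M) * ↑(lowerCross t p N i j)) := by
  have hx : p * seg t⁻¹ 0 i * x (j + 1) = x j * p * seg t⁻¹ 0 i := by
    rw [mul_assoc, ← (h.commute_x_inv_seg (by lia) (by lia) (by lia)).eq, ← mul_assoc,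
      (h.semiconjBy_p_x j hjN).eq]
  have hV : Commute (x j) (seg t⁻¹ (j + 1) N) :=
    h.commute_x_inv_seg (by lia) (by lia) (by lia)
  have hV' : Commute (x (j + 1)) (seg t⁻¹ i j) :=
    h.commute_x_inv_seg (by lia) (by lia) (by lia)
  have hsplit : cyclicProd t⁻¹ p N i =
      seg t⁻¹ i j * (t j)⁻¹ * (seg t⁻¹ (j + 1) N * (p * seg t⁻¹ 0 i)) := by
    rw [cyclicProd, seg_eq_mul_mul t⁻¹ hij hjN, Pi.inv_apply]
    simp only [mul_assoc]
  have hmain : cyclicProd t⁻¹ p N i * x (j + 1) =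
      seg t⁻¹ i j * (t j)⁻¹ * x j * (seg t⁻¹ (j + 1) N * (p * seg t⁻¹ 0 i)) := by
    rw [hsplit, mul_assoc, mul_assoc (seg t⁻¹ (j + 1) N), hx, mul_assoc (x j), ← mul_assoc _ (x j),
      ← hV.eq]
    simp only [mul_assoc]
  have hpass : seg t⁻¹ i j * x (j + 1) * (t j)⁻¹ * (seg t⁻¹ (j + 1) N * (p * seg t⁻¹ 0 i)) =
      x (j + 1) * cyclicProd t⁻¹ p N i := by
    rw [← hV'.eq, hsplit]
    simp only [mul_assoc]
  have hcross : seg t⁻¹ i j * x j * (seg t⁻¹ (j + 1) N * (p * seg t⁻¹ 0 i)) =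
      x i * lowerCross t p N i j := by
    rw [h.inv_seg_mul_x hij (by lia), lowerCross]
    simp only [mul_assoc]
  rw [← Units.val_mul, hmain, h.inv_t_mul_x_succ hjN, hpass, hcross, Units.val_mul,
    Units.val_mul]

lemma dunkl_eq (hjN : j ≤ N) :
    dunkl κ t x p N j = κ • ((↑(x j)⁻¹ : M) *
      (↑(cyclicProd t⁻¹ p N j) - ↑(cyclicProd t⁻¹ p N j)⁻¹)) := by
  have hx : seg t j N * (x N)⁻¹ = (x j)⁻¹ * seg t⁻¹ j N := by
    rw [mul_inv_eq_iff_eq_mul, mul_assoc, h.inv_seg_mul_x hjN le_rfl, inv_mul_cancel_left]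
  calc
    _ = κ • ((↑(seg t j N * (x N)⁻¹) : M) * (↑(cyclicProd t⁻¹ p N N) - ↑(cyclicProd t⁻¹ p N N)⁻¹)
          * ↑(seg t⁻¹ j N)⁻¹) := by
      simp only [dunkl, Units.val_mul, mul_assoc, smul_mul_assoc, mul_smul_comm]
    _ = _ := by
      rw [hx, cyclicProd_eq_conj_last hjN]
      simp [mul_sub, sub_mul, mul_assoc]

lemma x_mul_dunkl (hjN : j ≤ N) :
    (x j : M) * dunkl κ t x p N j = κ • ((↑(seg t⁻¹ j N) : M) *
      (↑(cyclicProd t⁻¹ p N N) - ↑(cyclicProd t⁻¹ p N N)⁻¹) * ↑(seg t⁻¹ j N)⁻¹) := by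
  rw [h.dunkl_eq hjN, mul_smul_comm, Units.mul_inv_cancel_left, cyclicProd_eq_conj_last hjN]
  simp [mul_sub, sub_mul, mul_assoc]

lemma dunkl_mul_x (hjN : j ≤ N) :
    dunkl κ t x p N j * x j = κ • ((↑(seg t 0 j)⁻¹ : M) *
      (q • (↑(cyclicProd t p N 0) : M) - q⁻¹ • (↑(cyclicProd t p N 0)⁻¹ : M)) *
        ↑(seg t 0 j)) := by
  have hinv : (x j)⁻¹ * (cyclicProd t⁻¹ p N j)⁻¹ * x j = q⁻¹ • (cyclicProd t p N j)⁻¹ := by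
    rw [← Units.smul_inv, ← h.conj_inv_cyclicProd hjN]
    group
  calc
    _ = κ • ((↑((x j)⁻¹ * cyclicProd t⁻¹ p N j * x j) : M) -
          ↑((x j)⁻¹ * (cyclicProd t⁻¹ p N j)⁻¹ * x j)) := by
      rw [h.dunkl_eq hjN, smul_mul_assoc, mul_sub, sub_mul]
      simp only [Units.val_mul]
    _ = _ := by
      rw [h.conj_inv_cyclicProd hjN, hinv, cyclicProd_eq_conj_zero hjN]
      simp [mul_sub, sub_mul, mul_assoc, smul_mul_assoc, mul_smul_comm]

lemma dunkl_mul_x_of_lt (hij : i ≤ j) (hjN : j < N) :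
    dunkl κ t x p N (j + 1) * x i - x i * dunkl κ t x p N (j + 1) =
      (δ * κ) • ((↑(seg t⁻¹ i N) : M) * ↑(seg t 0 j)⁻¹ *
        (q • (↑(cyclicProd t p N 0) : M) + ↑(cyclicProd t⁻¹ p N N)⁻¹) *
          ↑(seg t⁻¹ (j + 1) N)⁻¹ * ↑(seg t 0 i)) := by
  have hcomm := commutator_inv_mul_sub_inv (h.commute_x_x (j + 1) i (by lia) (by lia))
    (h.inv_cyclicProd_succ_mul_x hij hjN)
  have hscalar : (q • cyclicProd t p N (j + 1))⁻¹ * q • upperCross t p N i j *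
      (cyclicProd t⁻¹ p N (j + 1))⁻¹ =
      (cyclicProd t p N (j + 1))⁻¹ * upperCross t p N i j * (cyclicProd t⁻¹ p N (j + 1))⁻¹ := by
    rw [Units.smul_inv, smul_mul_assoc, mul_smul_comm, inv_smul_smul]
  rw [h.conj_inv_cyclicProd hjN, ← Units.val_mul, ← Units.val_mul, hscalar,
    ← h.conj_inv_cyclicProd_last_eq_upperCross hij hjN,
    ← h.conj_cyclicProd_zero_eq_upperCross hij hjN] at hcomm
  rw [h.dunkl_eq hjN, smul_mul_assoc, mul_smul_comm, ← smul_sub, hcomm, smul_smul, mul_comm κ]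
  simp [mul_add, add_mul, smul_mul_assoc, mul_smul_comm]

lemma dunkl_mul_x_of_gt (hij : i ≤ j) (hjN : j < N) :
    dunkl κ t x p N i * x (j + 1) - x (j + 1) * dunkl κ t x p N i =
      (δ * κ) • ((↑(seg t 0 i)⁻¹ : M) * ↑(seg t⁻¹ (j + 1) N) *
        (q⁻¹ • (↑(cyclicProd t p N 0)⁻¹ : M) + ↑(cyclicProd t⁻¹ p N N)) *
          ↑(seg t 0 j) * ↑(seg t⁻¹ i N)⁻¹) := by
  have hcomm := commutator_inv_mul_sub_inv (h.commute_x_x i (j + 1) (by lia) (by lia))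
    (h.inv_cyclicProd_mul_x_succ hij hjN)
  have hscalar : (q • cyclicProd t p N i)⁻¹ * lowerCross t p N i j * (cyclicProd t⁻¹ p N i)⁻¹ =
      q⁻¹ • ((cyclicProd t p N i)⁻¹ * lowerCross t p N i j * (cyclicProd t⁻¹ p N i)⁻¹) := by
    rw [Units.smul_inv, smul_mul_assoc, smul_mul_assoc]
  rw [h.conj_inv_cyclicProd (hij.trans hjN.le), ← Units.val_mul, ← Units.val_mul, hscalar,
    ← h.conj_inv_cyclicProd_zero_eq_lowerCross hij hjN,
    ← h.conj_cyclicProd_last_eq_lowerCross hij hjN] at hcomm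
  rw [h.dunkl_eq (by lia), smul_mul_assoc, mul_smul_comm, ← smul_sub, hcomm, smul_smul, mul_comm κ,
    add_comm]
  simp [mul_add, add_mul, smul_mul_assoc, mul_smul_comm]

theorem dunkl_relations {T Ti Y Yi D : ℕ → M} (hT : ∀ k < N, T k = t k)
    (hTi : ∀ k < N, Ti k = ↑(t⁻¹ k))
    (hY : ∀ j, Y j = aF T j (N - j) * p * aF Ti 0 j)
    (hYi : ∀ j ≤ N, Y j * Yi j = 1)
    (hD : ∀ j, D j = aF T j (N - j) * (κ • (((x N)⁻¹ : Mˣ) * (Y N - Yi N))) * dF T j (N - j)) :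
    (∀ l ≤ N, x l * D l = κ • (aF Ti l (N - l) * (Y N - Yi N) * dF T l (N - l))) ∧
    (∀ l ≤ N, D l * x l = κ • (dF Ti 0 l * (q • Y 0 - q⁻¹ • Yi 0) * aF T 0 l)) ∧
    (∀ i j, i < j → j ≤ N → D j * x i - x i * D j = (δ * κ) • (aF Ti i (N - i) * dF Ti 0 (j - 1) *
      (q • Y 0 + Yi N) * dF T j (N - j) * aF T 0 i)) ∧
    (∀ i j, i < j → j ≤ N → D i * x j - x j * D i = (δ * κ) • (dF Ti 0 i * aF Ti j (N - j) *
      (q⁻¹ • Yi 0 + Y N) * aF T 0 (j - 1) * dF T i (N - i))) := by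
  have hdT (k : ℕ) (hk : k < N) : T k = ↑(t⁻¹ k)⁻¹ := by rw [hT k hk, Pi.inv_apply, inv_inv]
  have hY_zero : Y 0 = cyclicProd t p N 0 := by
    rw [hY, aF_eq_val_seg hT, cyclicProd_zero, Units.val_mul]
    exact mul_one _
  have hY_last : Y N = cyclicProd t⁻¹ p N N := by
    rw [hY, Nat.sub_self, cyclicProd_last, Units.val_mul, ← aF_eq_val_seg hTi]
    exact congrArg (· * _) (one_mul _)
  have hYi_zero : Yi 0 = ↑(cyclicProd t p N 0)⁻¹ :=
    (Units.inv_eq_of_mul_eq_one_right (hY_zero ▸ hYi 0 N.zero_le)).symm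
  have hYi_last : Yi N = ↑(cyclicProd t⁻¹ p N N)⁻¹ :=
    (Units.inv_eq_of_mul_eq_one_right (hY_last ▸ hYi N le_rfl)).symm
  have hD_dunkl (j : ℕ) : D j = dunkl κ t x p N j := by
    rw [hD, aF_eq_val_seg hT, dF_eq_val_inv_seg hdT, hY_last, hYi_last, dunkl]
  have hA {j : ℕ} (hj : j ≤ N) : aF T 0 j = seg t 0 j :=
    aF_eq_val_seg fun k hk => hT k (hk.trans_le hj)
  have hd {j : ℕ} (hj : j ≤ N) : dF Ti 0 j = ↑(seg t 0 j)⁻¹ :=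
    dF_eq_val_inv_seg fun k hk => hTi k (hk.trans_le hj)
  simp only [hD_dunkl, hY_zero, hY_last, hYi_zero, hYi_last, aF_eq_val_seg hTi,
    dF_eq_val_inv_seg hdT]
  refine ⟨fun l hl => h.x_mul_dunkl hl, fun l hl => ?_, fun i j hij hj => ?_, fun i j hij hj => ?_⟩
  · rw [hA hl, hd hl, h.dunkl_mul_x hl]
  · obtain ⟨j, rfl⟩ := Nat.exists_eq_add_one_of_ne_zero (Nat.ne_zero_of_lt hij)
    rw [hA (by lia), hd (by lia), h.dunkl_mul_x_of_lt (by lia) (by lia), Nat.add_sub_cancel]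
  · obtain ⟨j, rfl⟩ := Nat.exists_eq_add_one_of_ne_zero (Nat.ne_zero_of_lt hij)
    rw [hA (by lia), hd (by lia), h.dunkl_mul_x_of_gt (by lia) (by lia), Nat.add_sub_cancel]

end IsDoubleAffineHecke

end DoubleAffineHecke

section DemazureLusztig

variable {L : Type*} [CommRing L] [Algebra R L]

/-- `A` is the Demazure–Lusztig operator of the involution `s` exchanging `x` and `y`, that is,
`A p = ((τ⁻¹ y - τ x) * s p + (τ - τ⁻¹) y * p) / (y - x)`. -/
structure IsDemazureLusztig (τ : Rˣ) (s : L ≃ₐ[R] L) (x y : L) (A : Module.End R L) : Prop where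
  map_left : s x = y
  map_right : s y = x
  involutive : Function.Involutive s
  regular : IsLeftRegular (y - x)
  sub_mul_apply : ∀ p, (y - x) * A p =
    ((τ⁻¹ : Rˣ) • y - τ • x) * s p + ((τ : R) - (τ⁻¹ : Rˣ)) • (y * p)

namespace IsDemazureLusztig

variable {τ : Rˣ} {s s' : L ≃ₐ[R] L} {x y x' y' z : L} {A B P : Module.End R L}

lemma apply_left_mul (h : IsDemazureLusztig τ s x y A) (p : L) :
    A (x * p) = y * (A p - ((τ : R) - (τ⁻¹ : Rˣ)) • p) := by
  apply h.regular
  have hp := h.sub_mul_apply p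
  have hxp := h.sub_mul_apply (x * p)
  simp only [map_mul, h.map_left, Units.smul_def, Algebra.smul_def, map_sub] at hp hxp ⊢
  linear_combination hxp - y * hp

lemma apply_mul_of_fixed (h : IsDemazureLusztig τ s x y A) (hz : s z = z) (p : L) :
    A (z * p) = z * A p := by
  apply h.regular
  have hp := h.sub_mul_apply p
  have hzp := h.sub_mul_apply (z * p)
  simp only [map_mul, hz, Units.smul_def, Algebra.smul_def, map_sub] at hp hzp ⊢
  linear_combination hzp - z * hp

lemma apply_apply (h : IsDemazureLusztig τ s x y A) (p : L) :
    A (A p) = p + ((τ : R) - (τ⁻¹ : Rˣ)) • A p := by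
  apply h.regular.mul h.regular
  have hp := h.sub_mul_apply p
  have hAp := h.sub_mul_apply (A p)
  have hsp := congrArg s hp
  have hτ : algebraMap R L τ * algebraMap R L (τ⁻¹ : Rˣ) = 1 := by simp [← map_mul]
  simp only [map_mul, map_add, map_sub, h.map_left, h.map_right, h.involutive p, Units.smul_def,
    Algebra.smul_def, AlgEquiv.commutes] at hp hAp hsp ⊢
  set τ₁ := algebraMap R L τ
  set τ₂ := algebraMap R L (τ⁻¹ : Rˣ)
  linear_combination (y - x) * hAp - (τ₂ * y - τ₁ * x) * hsp + (τ₁ - τ₂) * x * hp +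
    (y - x) ^ 2 * p * hτ

lemma mul_add_eq_one (h : IsDemazureLusztig τ s x y A) :
    A * (A + ((τ⁻¹ : Rˣ) - (τ : R)) • 1) = 1 := by
  ext p
  simp only [mul_add, mul_smul_comm, mul_one, LinearMap.add_apply, Module.End.mul_apply,
    LinearMap.smul_apply, Module.End.one_apply, h.apply_apply]
  module

lemma isUnit (h : IsDemazureLusztig τ s x y A) : IsUnit A := by
  refine ⟨⟨A, A + ((τ⁻¹ : Rˣ) - (τ : R)) • 1, h.mul_add_eq_one, ?_⟩, rfl⟩
  rw [add_mul, smul_one_mul, ← mul_smul_one, ← mul_add, h.mul_add_eq_one]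

lemma mul_mulLeft_mul (h : IsDemazureLusztig τ s x y A) :
    A * LinearMap.mulLeft R x * A = LinearMap.mulLeft R y := by
  ext p
  simp only [Module.End.mul_apply, LinearMap.mulLeft_apply, h.apply_left_mul, h.apply_apply,
    add_sub_cancel_right]

lemma intertwine (hA : IsDemazureLusztig τ s x y A) (hB : IsDemazureLusztig τ s' x' y' B)
    (hx : ∀ p, P (x * p) = x' * P p) (hy : ∀ p, P (y * p) = y' * P p)
    (hs : ∀ p, P (s p) = s' (P p)) (p : L) : P (A p) = B (P p) := by
  apply hB.regular
  have hp := congrArg P (hA.sub_mul_apply p)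
  have hPp := hB.sub_mul_apply (P p)
  simp only [sub_mul, smul_mul_assoc, map_add, map_sub, map_smul, Units.smul_def, hx, hy,
    hs] at hp hPp ⊢
  rw [hp, hPp]

lemma commute (hA : IsDemazureLusztig τ s x y A) (hB : IsDemazureLusztig τ s' x' y' B)
    (hx : s x' = x') (hy : s y' = y') (hx' : s' x = x) (hy' : s' y = y)
    (hs : ∀ p, s (s' p) = s' (s p)) : Commute A B := by
  have hBs (p : L) : B (s p) = s (B p) :=
    (hB.intertwine (P := s.toLinearMap) hB (by simp [hx]) (by simp [hy]) hs p).symm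
  ext p
  exact (hA.intertwine hA (hB.apply_mul_of_fixed hx') (hB.apply_mul_of_fixed hy') hBs p).symm

section Braid

variable (hA : IsDemazureLusztig τ s x y A) (hB : IsDemazureLusztig τ s' y z B)
include hA hB

lemma sub_mul_comp_left (hz : s z = z) (p : L) :
    (y - x) * (z - y) * (z - x) * A (B p) =
      (z - y) * (τ⁻¹ • y - τ • x) * ((τ⁻¹ • z - τ • x) * s (s' p) +
        ((τ : R) - (τ⁻¹ : Rˣ)) • (z * s p)) +
      (z - x) * ((τ : R) - (τ⁻¹ : Rˣ)) • (y * ((τ⁻¹ • z - τ • y) * s' p +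
        ((τ : R) - (τ⁻¹ : Rˣ)) • (z * p))) := by
  have hBp := hB.sub_mul_apply p
  have hABp := hA.sub_mul_apply (B p)
  have hsBp := congrArg s hBp
  simp only [map_mul, map_add, map_sub, hA.map_right, hz, Units.smul_def, Algebra.smul_def,
    AlgEquiv.commutes] at hBp hABp hsBp ⊢
  set τ₁ := algebraMap R L τ
  set τ₂ := algebraMap R L (τ⁻¹ : Rˣ)
  linear_combination (z - y) * (z - x) * hABp + (z - y) * (τ₂ * y - τ₁ * x) * hsBp +
    (z - x) * (τ₁ - τ₂) * y * hBp

lemma sub_mul_comp_right (hx : s' x = x) (p : L) :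
    (y - x) * (z - y) * (z - x) * B (A p) =
      (y - x) * (τ⁻¹ • z - τ • y) * ((τ⁻¹ • z - τ • x) * s' (s p) +
        ((τ : R) - (τ⁻¹ : Rˣ)) • (z * s' p)) +
      (z - x) * ((τ : R) - (τ⁻¹ : Rˣ)) • (z * ((τ⁻¹ • y - τ • x) * s p +
        ((τ : R) - (τ⁻¹ : Rˣ)) • (y * p))) := by
  have hAp := hA.sub_mul_apply p
  have hBAp := hB.sub_mul_apply (A p)
  have hs'Ap := congrArg s' hAp
  simp only [map_mul, map_add, map_sub, hB.map_left, hx, Units.smul_def, Algebra.smul_def,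
    AlgEquiv.commutes] at hAp hBAp hs'Ap ⊢
  set τ₁ := algebraMap R L τ
  set τ₂ := algebraMap R L (τ⁻¹ : Rˣ)
  linear_combination (y - x) * (z - x) * hBAp + (y - x) * (τ₂ * z - τ₁ * y) * hs'Ap +
    (z - x) * (τ₁ - τ₂) * z * hAp

lemma braid (hz : s z = z) (hx : s' x = x) (hs : ∀ p, s (s' (s p)) = s' (s (s' p))) :
    A * B * A = B * A * B := by
  have hreg : IsLeftRegular (z - x) := fun a b hab => s.symm.injective <| hB.regular <|
    s.injective <| by simpa [hz, hA.map_right] using hab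
  ext p
  simp only [Module.End.mul_apply]
  -- Both sides become combinations of the images of `p` under the six products of `s` and `s'`.
  apply ((hA.regular.mul hA.regular).mul (hB.regular.mul hB.regular)).mul hreg
  have hABAp := hA.sub_mul_comp_left hB hz (A p)
  have hBABp := hA.sub_mul_comp_right hB hx (B p)
  have hAp := hA.sub_mul_apply p
  have hsAp := congrArg s hAp
  have hs'Ap := congrArg s' hAp
  have hss'Ap := congrArg s hs'Ap
  have hBp := hB.sub_mul_apply p
  have hsBp := congrArg s hBp
  have hs'Bp := congrArg s' hBp
  have hs'sBp := congrArg s' hsBp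
  simp only [map_mul, map_add, map_sub, hA.map_left, hA.map_right, hB.map_left, hB.map_right,
    hA.involutive p, hB.involutive p, hs, hz, hx, Units.smul_def, Algebra.smul_def,
    AlgEquiv.commutes] at hABAp hBABp hAp hsAp hs'Ap hss'Ap hBp hsBp hs'Bp hs'sBp ⊢
  set τ₁ := algebraMap R L τ
  set τ₂ := algebraMap R L (τ⁻¹ : Rˣ)
  linear_combination (y - x) * (z - y) * (hABAp - hBABp) +
    (y - x) * (z - y) * (τ₂ * y - τ₁ * x) * (τ₂ * z - τ₁ * x) * hss'Ap -
    (z - y) ^ 2 * (τ₂ * y - τ₁ * x) * (τ₁ - τ₂) * z * hsAp +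
    (y - x) * (z - y) * (τ₁ - τ₂) * y * (τ₂ * z - τ₁ * y) * hs'Ap +
    (z - y) * (z - x) * (τ₁ - τ₂) ^ 2 * y * z * hAp -
    (y - x) * (z - y) * (τ₂ * z - τ₁ * y) * (τ₂ * z - τ₁ * x) * hs'sBp +
    (y - x) ^ 2 * (τ₂ * z - τ₁ * y) * (τ₁ - τ₂) * z * hs'Bp -
    (y - x) * (z - y) * (τ₁ - τ₂) * z * (τ₂ * y - τ₁ * x) * hsBp -
    (y - x) * (z - x) * (τ₁ - τ₂) ^ 2 * y * z * hBp

end Braid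

end IsDemazureLusztig

end DemazureLusztig

section LaurentPolynomials

lemma isLeftRegular_single_sub_single {A : Type*} [AddCommGroup A] [IsAddTorsionFree A] {a b : A}
    (hab : a ≠ b) :
    IsLeftRegular (AddMonoidAlgebra.single a 1 - AddMonoidAlgebra.single b 1 :
      AddMonoidAlgebra R A) := by
  rw [isLeftRegular_iff_right_eq_zero_of_mul]
  intro f hf
  have htranslate (c : A) (k : ℕ) : f.coeff (k • (a - b) + c) = f.coeff c := by
    induction k with
    | zero => simp
    | succ k ih =>
      have hk : f.coeff (-a + (a + (k • (a - b) + c))) =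
          f.coeff (-b + (a + (k • (a - b) + c))) := by
        simpa [sub_mul, sub_eq_zero] using congrArg (fun g => g.coeff (a + (k • (a - b) + c))) hf
      rw [← ih, ← neg_add_cancel_left a (k • (a - b) + c), hk]
      congr 1
      rw [succ_nsmul]
      abel
  by_contra hne
  obtain ⟨c, hc⟩ : ∃ c, f.coeff c ≠ 0 := by
    by_contra! h
    exact hne (AddMonoidAlgebra.ext (Finsupp.ext h))
  have hinj : Function.Injective fun k : ℕ => k • (a - b) + c :=
    (add_left_injective c).comp <| injective_nsmul_iff_not_isOfFinAddOrder.2 <|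
      not_isOfFinAddOrder_of_isAddTorsionFree (sub_ne_zero.2 hab)
  refine Set.infinite_range_of_injective hinj (f.coeff.hasFiniteSupport.subset ?_)
  rintro _ ⟨k, rfl⟩
  simpa [htranslate] using hc

lemma end_ext_mono {P Q : Module.End R (Laur R n)} (h : ∀ a c, P (mono a c) = Q (mono a c)) :
    P = Q :=
  AddMonoidAlgebra.lhom_ext' fun a => LinearMap.ext (h a)

lemma Xel_mul_mono (i : Fin n) (a : Fin n →₀ ℤ) (c : R) :
    Xel i * mono a c = mono (Finsupp.single i 1 + a) c := by
  simp [Xel, mono]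

/-- The action of the symmetric group permuting the variables of the Laurent polynomial ring. -/
def permVars : Equiv.Perm (Fin n) →* (Laur R n ≃ₐ[R] Laur R n) where
  toFun w := AddMonoidAlgebra.domCongr R R (Finsupp.domCongr w)
  map_one' := AlgEquiv.ext fun p => AddMonoidAlgebra.ext <| Finsupp.ext fun a => by
    rw [AddMonoidAlgebra.coeff_domCongr]
    exact congrArg p.coeff (Finsupp.ext fun _ => rfl)
  map_mul' v w := AlgEquiv.ext fun p => AddMonoidAlgebra.ext <| Finsupp.ext fun a => by
    rw [AlgEquiv.mul_apply]
    simp only [AddMonoidAlgebra.coeff_domCongr]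
    exact congrArg p.coeff (Finsupp.ext fun _ => rfl)

lemma permVars_mono (w : Equiv.Perm (Fin n)) (a : Fin n →₀ ℤ) (c : R) :
    permVars w (mono a c) = mono (Finsupp.equivMapDomain w a) c := by
  simp [permVars, mono]

lemma permVars_Xel (w : Equiv.Perm (Fin n)) (i : Fin n) :
    permVars w (Xel i) = (Xel (w i) : Laur R n) := by
  rw [Xel, permVars_mono, Finsupp.equivMapDomain_single, Xel]

lemma permVars_swap_Xel {k m : ℕ} (hk : k + 1 < n) (hm : m < n) (hmk : m ≠ k) (hmk' : m ≠ k + 1) :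
    permVars (Equiv.swap ⟨k, Nat.lt_of_succ_lt hk⟩ ⟨k + 1, hk⟩) (Xel ⟨m, hm⟩) =
      (Xel ⟨m, hm⟩ : Laur R n) := by
  rw [permVars_Xel, Equiv.swap_apply_of_ne_of_ne (Fin.ne_of_val_ne hmk) (Fin.ne_of_val_ne hmk')]

lemma isDemazureLusztig_of_sub_mul_eq {τ : Rˣ} {i j : Fin n} (hij : i ≠ j)
    {A : Module.End R (Laur R n)}
    (hA : ∀ p, (Xel j - Xel i) * A p = ((τ⁻¹ : Rˣ) • Xel j - τ • Xel i) *
      permVars (Equiv.swap i j) p + ((τ : R) - (τ⁻¹ : Rˣ)) • (Xel j * p)) :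
    IsDemazureLusztig τ (permVars (Equiv.swap i j)) (Xel i) (Xel j) A where
  map_left := by rw [permVars_Xel, Equiv.swap_apply_left]
  map_right := by rw [permVars_Xel, Equiv.swap_apply_right]
  involutive p := by
    rw [← AlgEquiv.mul_apply, ← map_mul, Equiv.swap_mul_self, map_one, AlgEquiv.one_apply]
  regular := isLeftRegular_single_sub_single fun h =>
    hij (Finsupp.single_left_injective one_ne_zero h).symm
  sub_mul_apply := hA

lemma XOp_eq_mulLeft {i : ℕ} (hi : i < n) :
    XOp i = LinearMap.mulLeft R (Xel ⟨i, hi⟩ : Laur R n) :=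
  dif_pos hi

lemma XOp_mul_XinvOp (i : ℕ) : XOp i * XinvOp i = (1 : Module.End R (Laur R n)) := by
  unfold XOp XinvOp
  split_ifs with hi
  · refine end_ext_mono fun a c => ?_
    simp [mulOp, Xel, XinvEl, mono, ← add_assoc]
  · rfl

lemma XinvOp_mul_XOp (i : ℕ) : XinvOp i * XOp i = (1 : Module.End R (Laur R n)) := by
  unfold XOp XinvOp
  split_ifs with hi
  · refine end_ext_mono fun a c => ?_
    simp [mulOp, Xel, XinvEl, mono, ← add_assoc]
  · rfl

/-- Multiplication by `X_i` as a unit of the algebra of operators. -/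
def XUnit (i : ℕ) : (Module.End R (Laur R n))ˣ where
  val := XOp i
  inv := XinvOp i
  val_inv := XOp_mul_XinvOp i
  inv_val := XinvOp_mul_XOp i

section Rotation

variable [NeZero n] {q : Rˣ} {P : Module.End R (Laur R n)}

lemma finRotate_symm_succ {k : ℕ} (hk : k + 1 < n) :
    (finRotate n).symm ⟨k + 1, hk⟩ = ⟨k, Nat.lt_of_succ_lt hk⟩ := by
  apply Fin.ext
  rw [coe_finRotate_symm_of_ne_zero (by simp [Fin.ext_iff]), Nat.add_sub_cancel]

lemma finRotate_symm_zero : (finRotate n).symm 0 = ⟨n - 1, Nat.sub_one_lt (NeZero.ne n)⟩ := by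
  obtain ⟨m, rfl⟩ := Nat.exists_eq_succ_of_ne_zero (NeZero.ne n)
  rw [Equiv.symm_apply_eq]
  exact finRotate_last.symm

variable (hP : ∀ (a : Fin n →₀ ℤ) (c : R),
  P (mono a c) = q ^ (a 0) • mono (Finsupp.equivMapDomain (finRotate n).symm a) c)
include hP

lemma rotate_Xel_mul (i : Fin n) (p : Laur R n) :
    P (Xel i * p) = q ^ (Finsupp.single i 1 0 : ℤ) • (Xel ((finRotate n).symm i) * P p) := by
  suffices P * mulOp (Xel i) =
      q ^ (Finsupp.single i 1 0 : ℤ) • (mulOp (Xel ((finRotate n).symm i)) * P) from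
    DFunLike.congr_fun this p
  refine end_ext_mono fun a c => ?_
  simp only [mulOp, Module.End.mul_apply, LinearMap.smul_apply, LinearMap.mulLeft_apply,
    Xel_mul_mono, hP, mul_smul_comm, smul_smul, Finsupp.add_apply, zpow_add,
    Finsupp.equivMapDomain_eq_mapDomain, Finsupp.mapDomain_add, Finsupp.mapDomain_single]

lemma rotate_Xel_succ_mul {k : ℕ} (hk : k + 1 < n) (p : Laur R n) :
    P (Xel ⟨k + 1, hk⟩ * p) = Xel ⟨k, Nat.lt_of_succ_lt hk⟩ * P p := by
  rw [rotate_Xel_mul hP, finRotate_symm_succ hk, Finsupp.single_eq_of_ne (by simp [Fin.ext_iff]),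
    zpow_zero, one_smul]

lemma rotate_permVars {w : Equiv.Perm (Fin n)} (hw : w 0 = 0) (p : Laur R n) :
    P (permVars w p) = permVars ((finRotate n)⁻¹ * w * finRotate n) (P p) := by
  suffices P * (permVars w : Laur R n ≃ₐ[R] Laur R n).toLinearMap =
      (permVars ((finRotate n)⁻¹ * w * finRotate n)).toLinearMap * P from DFunLike.congr_fun this p
  refine end_ext_mono fun a c => ?_
  have hw' : w.symm 0 = 0 := by rw [Equiv.symm_apply_eq, hw]
  have hrot : Finsupp.equivMapDomain (finRotate n).symm (Finsupp.equivMapDomain w a) =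
      Finsupp.equivMapDomain ((finRotate n)⁻¹ * w * finRotate n)
        (Finsupp.equivMapDomain (finRotate n).symm a) := by
    rw [← Finsupp.equivMapDomain_trans, ← Finsupp.equivMapDomain_trans, Equiv.Perm.mul_def,
      Equiv.Perm.mul_def, Equiv.Perm.inv_def, ← Equiv.trans_assoc, ← Equiv.trans_assoc,
      Equiv.symm_trans_self, Equiv.refl_trans]
  simp only [Module.End.mul_apply, AlgEquiv.toLinearMap_apply, permVars_mono, hP,
    Finsupp.equivMapDomain_apply, hw', hrot, Units.smul_def, map_smul]

end Rotation

end LaurentPolynomials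

section PolynomialRepresentation

variable {q τ : Rˣ} {t : ℕ → (Module.End R (Laur R n))ˣ} {p : (Module.End R (Laur R n))ˣ}

lemma commute_XUnit {k m : ℕ} (hk : k < n) (hm : m < n) :
    Commute (XUnit k : (Module.End R (Laur R n))ˣ) (XUnit m) := by
  refine Units.ext (LinearMap.ext fun r => ?_)
  simp [XUnit, XOp_eq_mulLeft, hk, hm, mul_left_comm]

lemma swap_conj_swap_comm {α : Type*} [DecidableEq α] {a b c : α} (hab : a ≠ b) (hbc : b ≠ c)
    (hac : a ≠ c) : Equiv.swap a b * Equiv.swap b c * Equiv.swap a b =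
      Equiv.swap b c * Equiv.swap a b * Equiv.swap b c := by
  rw [Equiv.swap_mul_swap_mul_swap hab hac, Equiv.swap_comm a b, Equiv.swap_comm b c,
    Equiv.swap_mul_swap_mul_swap hbc.symm hac.symm, Equiv.swap_comm]

variable (ht : ∀ (k : ℕ) (hk : k + 1 < n),
  IsDemazureLusztig τ (permVars (Equiv.swap ⟨k, Nat.lt_of_succ_lt hk⟩ ⟨k + 1, hk⟩))
    (Xel ⟨k, Nat.lt_of_succ_lt hk⟩) (Xel ⟨k + 1, hk⟩) (t k : Module.End R (Laur R n)))
include ht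

lemma isBraid_of_isDemazureLusztig : IsBraid (n - 1) t where
  braid k hk := by
    refine Units.ext ((ht k (by lia)).braid (ht (k + 1) (by lia))
      (permVars_swap_Xel _ _ (by lia) (by lia)) (permVars_swap_Xel _ _ (by lia) (by lia))
      fun r => ?_)
    simp only [← AlgEquiv.mul_apply, ← map_mul, ← mul_assoc]
    rw [swap_conj_swap_comm] <;> exact Fin.ne_of_val_ne (by lia)
  commute k m hkm hm := by
    refine Units.ext ((ht k (by lia)).commute (ht m (by lia))
      (permVars_swap_Xel _ _ (by lia) (by lia)) (permVars_swap_Xel _ _ (by lia) (by lia))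
      (permVars_swap_Xel _ _ (by lia) (by lia)) (permVars_swap_Xel _ _ (by lia) (by lia))
      fun r => ?_)
    have hdisjoint : (Equiv.swap (⟨k, by lia⟩ : Fin n) ⟨k + 1, by lia⟩).Disjoint
        (Equiv.swap ⟨m, by lia⟩ ⟨m + 1, by lia⟩) :=
      Equiv.Perm.disjoint_swap_swap (by grind)
    rw [← AlgEquiv.mul_apply, ← map_mul, hdisjoint.commute.eq, map_mul, AlgEquiv.mul_apply]

variable [NeZero n]

lemma semiconjBy_rotate
    (hp : ∀ (a : Fin n →₀ ℤ) (c : R), (p : Module.End R (Laur R n)) (mono a c) =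
      q ^ (a 0) • mono (Finsupp.equivMapDomain (finRotate n).symm a) c) {k : ℕ}
    (hk : k + 2 < n) : SemiconjBy p (t (k + 1)) (t k) := by
  have hswap (r : Laur R n) :
      p.1 (permVars (Equiv.swap ⟨k + 1, by lia⟩ ⟨k + 2, hk⟩) r) =
        permVars (Equiv.swap ⟨k, by lia⟩ ⟨k + 1, by lia⟩) (p.1 r) := by
    rw [rotate_permVars hp, ← finRotate_symm_succ (k := k) (by lia),
      ← finRotate_symm_succ (k := k + 1) hk, ← Equiv.Perm.inv_def, Equiv.swap_apply_apply, inv_inv]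
    exact Equiv.swap_apply_of_ne_of_ne (by simp [Fin.ext_iff]) (by simp [Fin.ext_iff])
  exact Units.ext <| LinearMap.ext <|
    (ht (k + 1) hk).intertwine (ht k (by lia)) (rotate_Xel_succ_mul hp _)
      (rotate_Xel_succ_mul hp hk) hswap

theorem isDoubleAffineHecke_of_isDemazureLusztig
    (hp : ∀ (a : Fin n →₀ ℤ) (c : R), (p : Module.End R (Laur R n)) (mono a c) =
      q ^ (a 0) • mono (Finsupp.equivMapDomain (finRotate n).symm a) c) :
    IsDoubleAffineHecke ((τ⁻¹ : Rˣ) - (τ : R)) q (n - 1) t XUnit p where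
  toIsBraid := isBraid_of_isDemazureLusztig ht
  t_mul_x_mul_t k hk := by
    refine Units.ext ?_
    simpa [XUnit, XOp_eq_mulLeft, show k < n by lia, show k + 1 < n by lia] using
      (ht k (by lia)).mul_mulLeft_mul
  commute_t_x k m hk hm hmk hmk' := by
    refine Units.ext (LinearMap.ext fun r => ?_)
    simpa [XUnit, XOp_eq_mulLeft, show m < n by lia] using
      (ht k (by lia)).apply_mul_of_fixed
        (permVars_swap_Xel (by lia) (by lia) hmk hmk') r
  commute_x_x k m hk hm :=
    have := NeZero.pos n
    commute_XUnit (by lia) (by lia)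
  semiconjBy_p_t k hk := semiconjBy_rotate ht hp (by lia)
  semiconjBy_p_x k hk := by
    refine Units.ext (LinearMap.ext fun r => ?_)
    have := rotate_Xel_succ_mul hp (k := k) (by lia) r
    simpa [XUnit, XOp_eq_mulLeft, show k < n by lia, show k + 1 < n by lia] using this
  p_mul_x_zero := by
    refine Units.ext (LinearMap.ext fun r => ?_)
    have := rotate_Xel_mul hp 0 r
    rw [finRotate_symm_zero] at this
    simpa [XUnit, XOp_eq_mulLeft, NeZero.pos n] using this
  inv_t k hk := Units.inv_eq_of_mul_eq_one_right (ht k (by lia)).mul_add_eq_one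

end PolynomialRepresentation

lemma exists_isDoubleAffineHecke [NeZero n] {q τ : Rˣ} {T : ℕ → Module.End R (Laur R n)}
    (hT : ∀ (k : ℕ) (hk : k + 1 < n), IsDemazureLusztig τ
      (permVars (Equiv.swap ⟨k, Nat.lt_of_succ_lt hk⟩ ⟨k + 1, hk⟩))
      (Xel ⟨k, Nat.lt_of_succ_lt hk⟩) (Xel ⟨k + 1, hk⟩) (T k))
    {P : Module.End R (Laur R n)}
    (hP : ∀ (a : Fin n →₀ ℤ) (c : R),
      P (mono a c) = q ^ (a 0) • mono (Finsupp.equivMapDomain (finRotate n).symm a) c)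
    (hTP : IsUnit (aF T 0 (n - 1) * P)) :
    ∃ (t : ℕ → (Module.End R (Laur R n))ˣ) (p : (Module.End R (Laur R n))ˣ),
      (∀ k < n - 1, T k = t k) ∧ P = p ∧
        IsDoubleAffineHecke ((τ⁻¹ : Rˣ) - (τ : R)) q (n - 1) t XUnit p := by
  have hunit (k : ℕ) : ∃ u : (Module.End R (Laur R n))ˣ, k < n - 1 → T k = u := by
    by_cases hk : k < n - 1
    · exact ⟨(hT k (by lia)).isUnit.unit, fun _ => rfl⟩
    · exact ⟨1, fun hk' => absurd hk' hk⟩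
  choose t ht using hunit
  rw [← Nat.sub_zero (n - 1), aF_eq_val_seg ht, Units.isUnit_units_mul] at hTP
  obtain ⟨p, rfl⟩ := hTP
  exact ⟨t, p, ht, rfl, isDoubleAffineHecke_of_isDemazureLusztig
    (fun k hk => ht k (by lia) ▸ hT k hk) hP⟩

theorem statement7_general [NeZero n] (q τ : Rˣ) (κ : R)
    (W : Equiv.Perm (Fin n) → Module.End R (Laur R n))
    (hW : ∀ (w : Equiv.Perm (Fin n)) (a : Fin n →₀ ℤ) (c : R),
      W w (mono a c) = mono (Finsupp.equivMapDomain w a) c)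
    (T Ti : ℕ → Module.End R (Laur R n))
    (hT : ∀ (k : ℕ) (hk : k + 1 < n) (p : Laur R n),
      (Xel ⟨k + 1, hk⟩ - Xel ⟨k, Nat.lt_of_succ_lt hk⟩) * T k p
        = ((τ⁻¹ : Rˣ) • Xel ⟨k + 1, hk⟩ - τ • Xel ⟨k, Nat.lt_of_succ_lt hk⟩)
            * W (Equiv.swap ⟨k, Nat.lt_of_succ_lt hk⟩ ⟨k + 1, hk⟩) p
          + ((τ : R) - (τ⁻¹ : Rˣ)) • (Xel ⟨k + 1, hk⟩ * p))
    (hTi : ∀ k, Ti k = T k + ((τ⁻¹ : Rˣ) - (τ : R)) • (1 : Module.End R (Laur R n)))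
    (piInv : Module.End R (Laur R n))
    (hpiInv : ∀ (a : Fin n →₀ ℤ) (c : R),
      piInv (mono a c) = q ^ (a 0) • mono (Finsupp.equivMapDomain (finRotate n).symm a) c)
    (Y Yi : ℕ → Module.End R (Laur R n))
    (hY : ∀ i, Y i = aF T i (n - 1 - i) * piInv * aF Ti 0 i)
    (hYinv : ∀ i, i < n → Y i * Yi i = 1 ∧ Yi i * Y i = 1)
    (D : ℕ → Module.End R (Laur R n))
    (hD : ∀ i, D i = aF T i (n - 1 - i)
        * (κ • (XinvOp (n - 1) * (Y (n - 1) - Yi (n - 1)))) * dF T i (n - 1 - i)) :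
    (∀ l : ℕ, l < n → XOp l * D l =
      κ • (aF Ti l (n - 1 - l) * (Y (n - 1) - Yi (n - 1)) * dF T l (n - 1 - l))) ∧
    (∀ l : ℕ, l < n → D l * XOp l =
      κ • (dF Ti 0 l * (q • Y 0 - q⁻¹ • Yi 0) * aF T 0 l)) ∧
    (∀ i j : ℕ, i < j → j < n → D j * XOp i - XOp i * D j =
      (((τ⁻¹ : Rˣ) - (τ : R)) * κ) • (aF Ti i (n - 1 - i) * dF Ti 0 (j - 1) *
        (q • Y 0 + Yi (n - 1)) * dF T j (n - 1 - j) * aF T 0 i)) ∧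
    (∀ i j : ℕ, i < j → j < n → D i * XOp j - XOp j * D i =
      (((τ⁻¹ : Rˣ) - (τ : R)) * κ) • (dF Ti 0 i * aF Ti j (n - 1 - j) *
        (q⁻¹ • Yi 0 + Y (n - 1)) * aF T 0 (j - 1) * dF T i (n - 1 - i))) := by
  have hperm (w : Equiv.Perm (Fin n)) (p : Laur R n) : W w p = permVars w p :=
    LinearMap.congr_fun (end_ext_mono (Q := (permVars w).toLinearMap) fun a c => by
      rw [hW, AlgEquiv.toLinearMap_apply, permVars_mono]) p
  have hDL (k : ℕ) (hk : k + 1 < n) := isDemazureLusztig_of_sub_mul_eq (A := T k)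
    (i := ⟨k, Nat.lt_of_succ_lt hk⟩) (j := ⟨k + 1, hk⟩) (by simp) fun p => hperm _ p ▸ hT k hk p
  have hY_zero : Y 0 = aF T 0 (n - 1) * piInv := by simp [hY, aF]
  have hY_isUnit : IsUnit (Y 0) :=
    have ⟨hright, hleft⟩ := hYinv 0 (NeZero.pos n)
    ⟨⟨Y 0, Yi 0, hright, hleft⟩, rfl⟩
  obtain ⟨t, p, ht, rfl, h⟩ := exists_isDoubleAffineHecke hDL hpiInv (hY_zero ▸ hY_isUnit)
  have hpos := NeZero.pos n
  have hlt (l : ℕ) : l < n ↔ l ≤ n - 1 := by lia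
  simp only [hlt]
  exact h.dunkl_relations ht (fun k hk => by rw [hTi, ht k hk]; exact (h.inv_t k hk).symm) hY
    (fun j hj => (hYinv j (by lia)).1) hD

/-- Relations between `X_i` and `D_j` (indices `0`-based; the paper's
`1`-based indices `i < j` become `0`-based `i < j`). -/
theorem statement7
    (F : Type*) [Field F] (n : ℕ) [NeZero n]
    (q τ : F) (hq : q ≠ 0) (hqroot : ∀ m : ℕ, m ≠ 0 → q ^ m ≠ 1) (hτ : τ ≠ 0)
    -- the action of the symmetric group permuting the variables
    (W : Equiv.Perm (Fin n) → Module.End F (Laur F n))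
    (hW : ∀ (w : Equiv.Perm (Fin n)) (a : Fin n →₀ ℤ) (c : F),
      W w (mono a c) = mono (Finsupp.equivMapDomain w a) c)
    -- the Demazure–Lusztig operators `T_k` and their inverses `Ti k = T k + τ⁻¹ - τ`
    (T Ti : ℕ → Module.End F (Laur F n))
    (hT : ∀ (k : ℕ) (hk : k + 1 < n) (p : Laur F n),
      (Xel ⟨k + 1, hk⟩ - Xel ⟨k, Nat.lt_of_succ_lt hk⟩) * T k p
        = (τ⁻¹ • Xel ⟨k + 1, hk⟩ - τ • Xel ⟨k, Nat.lt_of_succ_lt hk⟩)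
            * W (Equiv.swap ⟨k, Nat.lt_of_succ_lt hk⟩ ⟨k + 1, hk⟩) p
          + (τ - τ⁻¹) • (Xel ⟨k + 1, hk⟩ * p))
    (hTi : ∀ k, Ti k = T k + (τ⁻¹ - τ) • (1 : Module.End F (Laur F n)))
    (hTinv : ∀ k, k + 1 < n → T k * Ti k = 1 ∧ Ti k * T k = 1)
    -- the operator `π⁻¹`
    (piInv : Module.End F (Laur F n))
    (hpiInv : ∀ (a : Fin n →₀ ℤ) (c : F),
      piInv (mono a c)
        = q ^ (a 0) • mono (Finsupp.equivMapDomain (finRotate n).symm a) c)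
    -- the operators `Y_i = T_i ⋯ T_{n-1} ⬝ π⁻¹ ⬝ T_1⁻¹ ⋯ T_{i-1}⁻¹` and their inverses
    (Y Yi : ℕ → Module.End F (Laur F n))
    (hY : ∀ i, Y i = aF T i (n - 1 - i) * piInv * aF Ti 0 i)
    (hYinv : ∀ i, i < n → Y i * Yi i = 1 ∧ Yi i * Y i = 1)
    -- the `q`-Dunkl-type operators `D_i`
    (D : ℕ → Module.End F (Laur F n))
    (hD : ∀ i, D i = aF T i (n - 1 - i)
        * ((q - q⁻¹)⁻¹ • (XinvOp (n - 1) * (Y (n - 1) - Yi (n - 1))))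
        * dF T i (n - 1 - i))
    :
    (∀ l : ℕ, l < n →
      XOp l * D l
        = (q - q⁻¹)⁻¹ •
            (aF Ti l (n - 1 - l) * (Y (n - 1) - Yi (n - 1)) * dF T l (n - 1 - l))) ∧
    (∀ l : ℕ, l < n →
      D l * XOp l
        = (q - q⁻¹)⁻¹ • (dF Ti 0 l * (q • Y 0 - q⁻¹ • Yi 0) * aF T 0 l)) ∧
    (∀ i j : ℕ, i < j → j < n →
      D j * XOp i - XOp i * D j
        = ((τ⁻¹ - τ) * (q - q⁻¹)⁻¹) •
            (aF Ti i (n - 1 - i) * dF Ti 0 (j - 1) * (q • Y 0 + Yi (n - 1))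
              * dF T j (n - 1 - j) * aF T 0 i)) ∧
    (∀ i j : ℕ, i < j → j < n →
      D i * XOp j - XOp j * D i
        = ((τ⁻¹ - τ) * (q - q⁻¹)⁻¹) •
            (dF Ti 0 i * aF Ti j (n - 1 - j) * (q⁻¹ • Yi 0 + Y (n - 1))
              * aF T 0 (j - 1) * dF T i (n - 1 - i))) := by
  exact statement7_general (Units.mk0 q hq) (Units.mk0 τ hτ) (q - q⁻¹)⁻¹ W hW T Ti hT hTi piInv
    (fun a c => by simpa [Units.smul_def] using hpiInv a c) Y Yi hY hYinv D hD
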